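/- Fix constants 0 < q < p ≤ 1. There exists L > 0 such that uniformly for all n ∈ ℕ and all integers Δ with 0 ≤ Δ ≤ n/L, if T ~ Bin(n+Δ, q) and D ~ Bin(n−1, p) are independent, then P[T > D] ≤ L·exp(−n/L). -/

import Mathlib

/-!
The proof is the Chernoff method. For `z > 1` the indicator of `T > D` is at most `z ^ T * z⁻¹ ^ D`,
so by independence and the binomial generating function (`sum_binomPMF_mul_pow`)
`P[T > D] ≤ a ^ (n + Δ) * b ^ (n - 1)` with `a = q z + (1 - q)` and `b = p z⁻¹ + (1 - p)`
(`binomProb2_lt_le`). For `z = 1 + (p - q)` one has `a > 1`, `0 < b ≤ 1` and `a b < 1`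
(`exists_chernoff_bases`), so the bound is at most `b⁻¹ * (a b) ^ n * a ^ Δ`. This decays
exponentially in `n` as long as `Δ` is at most a small multiple of `n`.
-/

open Finset

/-- Probability mass function of the binomial distribution `Bin(m, r)`. -/
noncomputable def binomPMF (m : ℕ) (r : ℝ) (k : ℕ) : ℝ :=
  (m.choose k : ℝ) * r ^ k * (1 - r) ^ (m - k)

/-- `P[X ∈ P]` for `X ~ Bin(m, r)`. -/
noncomputable def binomProb (m : ℕ) (r : ℝ) (P : ℕ → Prop) : ℝ :=
  ∑ k ∈ Finset.range (m + 1), Set.indicator {k | P k} (binomPMF m r) k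

/-- `P[(X, Y) ∈ P]` for independent `X ~ Bin(m₁, r₁)` and `Y ~ Bin(m₂, r₂)`. -/
noncomputable def binomProb2 (m₁ : ℕ) (r₁ : ℝ) (m₂ : ℕ) (r₂ : ℝ) (P : ℕ → ℕ → Prop) : ℝ :=
  ∑ j ∈ Finset.range (m₁ + 1), ∑ k ∈ Finset.range (m₂ + 1),
    Set.indicator {jk : ℕ × ℕ | P jk.1 jk.2}
      (fun jk => binomPMF m₁ r₁ jk.1 * binomPMF m₂ r₂ jk.2) (j, k)

lemma binomPMF_nonneg {m : ℕ} {r : ℝ} (h0 : 0 ≤ r) (h1 : r ≤ 1) (k : ℕ) :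
    0 ≤ binomPMF m r k := by
  have : 0 ≤ 1 - r := by linarith
  unfold binomPMF
  positivity

/-- The probability generating function of the binomial distribution. -/
lemma sum_binomPMF_mul_pow (m : ℕ) (r x : ℝ) :
    ∑ k ∈ Finset.range (m + 1), binomPMF m r k * x ^ k = (r * x + (1 - r)) ^ m := by
  rw [add_pow]
  refine Finset.sum_congr rfl fun k _ => ?_
  unfold binomPMF
  rw [mul_pow]
  ring

/-- The exponential Markov inequality for `P[T > D]`. -/
lemma binomProb2_lt_le {p q z : ℝ} (hq : 0 ≤ q) (hq1 : q ≤ 1) (hp : 0 ≤ p) (hp1 : p ≤ 1)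
    (hz : 1 ≤ z) (m₁ m₂ : ℕ) :
    binomProb2 m₁ q m₂ p (fun t d => d < t) ≤
      (q * z + (1 - q)) ^ m₁ * (p * z⁻¹ + (1 - p)) ^ m₂ := by
  have hz0 : 0 < z := by linarith
  rw [← sum_binomPMF_mul_pow, ← sum_binomPMF_mul_pow, Finset.sum_mul_sum]
  unfold binomProb2
  refine Finset.sum_le_sum fun j _ => Finset.sum_le_sum fun k _ => ?_
  have hj := binomPMF_nonneg (m := m₁) hq hq1 j
  have hk := binomPMF_nonneg (m := m₂) hp hp1 k
  by_cases h : k < j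
  · rw [Set.indicator_of_mem (by exact h)]
    have h1 : 1 ≤ z ^ j * z⁻¹ ^ k := by
      rw [inv_pow, ← div_eq_mul_inv, one_le_div (by positivity)]
      exact pow_le_pow_right₀ hz h.le
    calc binomPMF m₁ q j * binomPMF m₂ p k
        ≤ binomPMF m₁ q j * binomPMF m₂ p k * (z ^ j * z⁻¹ ^ k) :=
          le_mul_of_one_le_right (mul_nonneg hj hk) h1
      _ = _ := by ring
  · rw [Set.indicator_of_notMem (by exact h)]
    positivity

/-- Some tilt `z` makes the two generating-function factors multiply to less than `1`. -/
lemma exists_chernoff_bases {p q : ℝ} (hq : 0 < q) (hqp : q < p) (hp : p ≤ 1) :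
    ∃ z : ℝ, 1 ≤ z ∧ 1 < q * z + (1 - q) ∧ 0 < p * z⁻¹ + (1 - p) ∧ p * z⁻¹ + (1 - p) ≤ 1 ∧
      (q * z + (1 - q)) * (p * z⁻¹ + (1 - p)) < 1 := by
  -- With `z = 1 + s`, the last inequality amounts to `q * (1 - p) * s < p - q`.
  obtain ⟨s, hs⟩ : ∃ s, s = p - q := ⟨_, rfl⟩
  have hs0 : 0 < s := by linarith
  have hz : 0 < 1 + s := by linarith
  have hb : p * (1 + s)⁻¹ + (1 - p) = (1 + (1 - p) * s) / (1 + s) := by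
    field_simp
    ring
  have hps : 0 ≤ (1 - p) * s := mul_nonneg (by linarith) hs0.le
  refine ⟨1 + s, by linarith, by nlinarith [mul_pos hq hs0], ?_, ?_, ?_⟩
  · rw [hb]
    positivity
  · rw [hb, div_le_one hz]
    nlinarith
  · rw [hb, ← mul_div_assoc, div_lt_one hz]
    have h1 : q * (1 - p) < 1 := by nlinarith
    have h2 : q * (1 - p) * s * s < s * s := by
      nlinarith [mul_pos hs0 hs0]
    have h3 : (q * (1 + s) + (1 - q)) * (1 + (1 - p) * s)
        = 1 + s - s * s + q * (1 - p) * s * s := by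
      have : p = q + s := by linarith
      subst this
      ring
    linarith

/-- equation (3.1) / `eq:expsmall`.
Fix constants `0 < q < p ≤ 1`.  There exists `L > 0` such that uniformly for all `n ∈ ℕ` and
all integers `Δ` with `0 ≤ Δ ≤ n/L`, if `T ~ Bin(n+Δ, q)` and `D ~ Bin(n−1, p)` are
independent, then `P[T > D] ≤ L·exp(−n/L)`. -/
theorem binomial_cross_tail_exponentially_small
    (p q : ℝ) (hq : 0 < q) (hqp : q < p) (hp : p ≤ 1) :
    ∃ L : ℝ, 0 < L ∧ ∀ n : ℕ, ∀ Δ : ℕ, (Δ : ℝ) ≤ (n : ℝ) / L →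
      binomProb2 (n + Δ) q (n - 1) p (fun t d => d < t) ≤ L * Real.exp (-(n : ℝ) / L) := by
  obtain ⟨z, hz, ha, hb, hb1, hab⟩ := exists_chernoff_bases hq hqp hp
  have key := binomProb2_lt_le hq.le (hqp.le.trans hp) (hq.trans hqp).le hp hz
  set a := q * z + (1 - q)
  set b := p * z⁻¹ + (1 - p)
  have ha0 : 0 < a := by linarith
  have hab0 : 0 < a * b := mul_pos ha0 hb
  have hα : 0 < Real.log a := Real.log_pos ha
  have hc : 0 < -Real.log (a * b) := neg_pos.2 (Real.log_neg hab0 hab)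
  set α := Real.log a with hαdef
  set c := -Real.log (a * b) with hcdef
  -- `L` must dominate both the prefactor `b⁻¹` and `(1 + α) / c`, the latter so that
  -- `-c n + α n / L ≤ -n / L`.
  obtain ⟨L, hL⟩ : ∃ L, L = b⁻¹ + (1 + α) / c := ⟨_, rfl⟩
  have hbi : 0 < b⁻¹ := inv_pos.2 hb
  have hd : 0 < (1 + α) / c := by positivity
  have hL0 : 0 < L := by linarith
  have hLb : b⁻¹ ≤ L := by linarith
  have hLc : (1 + α) / L ≤ c := by
    rw [div_le_iff₀ hL0, mul_comm, ← div_le_iff₀ hc]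
    linarith
  refine ⟨L, hL0, fun n Δ hΔ => (key (n + Δ) (n - 1)).trans ?_⟩
  -- The inequality absorbs the truncated subtraction at `n = 0`, since `b ≤ 1`.
  have hpow : b ^ (n - 1) ≤ b⁻¹ * b ^ n := by
    rw [inv_mul_eq_div, le_div_iff₀ hb, ← pow_succ]
    exact pow_le_pow_of_le_one hb.le hb1 (by omega)
  have e1 : (a * b) ^ n = Real.exp (-(c * n)) := by
    rw [← Real.exp_log hab0, ← Real.exp_nat_mul, hcdef]
    congr 1
    ring
  have e2 : a ^ Δ = Real.exp (α * Δ) := by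
    rw [mul_comm, Real.exp_nat_mul, hαdef, Real.exp_log ha0]
  have hexp : -(c * n) + α * Δ ≤ -(n : ℝ) / L := by
    have h1 : α * Δ ≤ α * (n / L) := mul_le_mul_of_nonneg_left hΔ hα.le
    have h2 : (1 + α) / L * n ≤ c * n := mul_le_mul_of_nonneg_right hLc n.cast_nonneg
    have h3 : (1 + α) / L * n = n / L + α * (n / L) := by ring
    rw [neg_div]
    linarith
  calc a ^ (n + Δ) * b ^ (n - 1) ≤ a ^ (n + Δ) * (b⁻¹ * b ^ n) := by gcongr
    _ = b⁻¹ * ((a * b) ^ n * a ^ Δ) := by rw [pow_add, mul_pow]; ring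
    _ = b⁻¹ * Real.exp (-(c * n) + α * Δ) := by rw [e1, e2, Real.exp_add]
    _ ≤ L * Real.exp (-(n : ℝ) / L) := by gcongr
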